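/- Let V be a finite-dimensional real normed vector space, C ⊆ V a solid closed cone, Ω ⊆ V an open set, and f : Ω → Ω a homeomorphism that is monotone with respect to C such that Per(f) is dense in Ω. Then for every x ∈ Ω, the set Per(f) of periodic points of f is dense in (x + ∂C) ∩ Ω and dense in (x − ∂C) ∩ Ω, where ∂C denotes the topological boundary of C in V. -/

import Mathlib

/-!
Let `≤` be the order of `C`. If `u ≤ f^n u` and `u` is a limit of periodic points above it, then
every such periodic point `v` satisfies `f^n u ≤ f^{nm} u ≤ f^{nm} v = v`, where `m` is a period
of `v`; letting `v → u` gives `f^n u = u`. Thus `f^n` has no strict sub- or supersolutions.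

Now let `y` be a frontier point of an upper set `A`. Choose periodic points `z` and `w` near `y`,
in the interiors of `y - C` and `y + C`, with common period `n`. Then `z ∉ A`, `w ∈ A`, and `f^n`
maps the small compact convex order interval `[z, w]` into itself. Push `f^n u` towards `z` by the
distance from `u` to the complement of `A`, and towards `w` by the distance from `u` to `A`. A
Brouwer fixed point of the perturbed map is a sub- or supersolution of `f^n`, hence fixed by `f^n`;
so the perturbation vanishes there, which places the point on the frontier of `A`.

Brouwer's theorem is proved as by Milnor and Rogers: if `h` vanishes off a compact set `B`, the
integral over `B` of the Jacobian of `id + t h` is a polynomial in `t`, equal to the volume of `B`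
for small `t` and hence for `t = 1`; a retraction onto a sphere would make it vanish at `t = 1`.
-/

open Filter Function MeasureTheory Metric Polynomial Set Topology
open scoped NNReal

section VolumePolynomial

theorem exists_polynomial_eval_eq_det_one_add_smul {R M : Type*} [CommRing R] [Nontrivial R]
    [AddCommGroup M] [Module R M] [Module.Free R M] [Module.Finite R M] (A : M →ₗ[R] M) :
    ∃ q : R[X], q.natDegree ≤ Module.finrank R M ∧
      ∀ t : R, q.eval t = LinearMap.det (1 + t • A) := by
  classical
  let b := Module.Free.chooseBasis R M
  refine ⟨((X : R[X]) • (LinearMap.toMatrix b b A).map C + (1 : Matrix _ _ R).map C).det, ?_,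
    fun t => ?_⟩
  · rw [Module.finrank_eq_card_chooseBasisIndex]
    exact natDegree_det_X_add_C_le _ _
  · rw [← LinearMap.det_toMatrix b, map_add, map_smul, LinearMap.toMatrix_one,
      ← coe_evalRingHom, RingHom.map_det]
    congr 1
    ext i j
    simp [Matrix.one_apply, apply_ite, add_comm, mul_comm t]

theorem exists_polynomial_eval_eq_integral {α 𝕜 : Type*} [MeasurableSpace α] {μ : Measure α}
    [RCLike 𝕜] {p : α → 𝕜[X]} {n : ℕ} (hn : ∀ x, (p x).natDegree ≤ n)
    (hp : ∀ t, Integrable (fun x => (p x).eval t) μ) :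
    ∃ q : 𝕜[X], ∀ t, q.eval t = ∫ x, (p x).eval t ∂μ := by
  classical
  let ℓ : ℕ → 𝕜[X] := Lagrange.basis (Finset.range (n + 1)) (fun i => (i : 𝕜))
  have interpolation (x : α) (t : 𝕜) :
      (p x).eval t = ∑ i ∈ Finset.range (n + 1), (p x).eval (i : 𝕜) * (ℓ i).eval t := by
    have degree_lt : (p x).degree < (Finset.range (n + 1)).card := by
      rw [Finset.card_range]
      exact degree_le_natDegree.trans_lt (mod_cast Nat.lt_succ_of_le (hn x))
    conv_lhs => rw [Lagrange.eq_interpolate Nat.cast_injective.injOn degree_lt,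
      Lagrange.interpolate_apply, eval_finsetSum]
    simp only [eval_mul, eval_C, ℓ]
  refine ⟨∑ i ∈ Finset.range (n + 1), C (∫ x, (p x).eval (i : 𝕜) ∂μ) * ℓ i, fun t => ?_⟩
  calc eval t (∑ i ∈ Finset.range (n + 1), C (∫ x, (p x).eval (i : 𝕜) ∂μ) * ℓ i)
      = ∑ i ∈ Finset.range (n + 1), ∫ x, (p x).eval (i : 𝕜) * (ℓ i).eval t ∂μ := by
        simp only [eval_finsetSum, eval_mul, eval_C, integral_mul_const]
    _ = ∫ x, ∑ i ∈ Finset.range (n + 1), (p x).eval (i : 𝕜) * (ℓ i).eval t ∂μ :=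
        (integral_finsetSum _ fun (i : ℕ) _ => (hp i).mul_const _).symm
    _ = ∫ x, (p x).eval t ∂μ := by simp only [← interpolation _ t]

theorem bijective_self_add_of_contractingWith {E : Type*} [NormedAddCommGroup E] [CompleteSpace E]
    {K : ℝ≥0} {h : E → E} (hh : ContractingWith K h) : Bijective fun x => x + h x := by
  refine bijective_iff_existsUnique _ |>.2 fun y => ?_
  have contracting : ContractingWith K fun x => y - h x :=
    ⟨hh.1, LipschitzWith.of_dist_le_mul fun a b => by
      simpa only [dist_sub_left] using hh.2.dist_le_mul a b⟩
  refine ⟨contracting.fixedPoint, ?_, fun x hx => contracting.fixedPoint_unique ?_⟩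
  · exact eq_sub_iff_add_eq.1 contracting.fixedPoint_isFixedPt.symm
  · exact (eq_sub_iff_add_eq.2 hx).symm

theorem image_eq_self_of_bijective_of_eqOn_compl {α : Type*} {φ : α → α} {s : Set α}
    (hφ : Bijective φ) (h : EqOn φ id sᶜ) : φ '' s = s := by
  rw [← compl_inj_iff, ← image_compl_eq hφ, h.image_eq, image_id]

variable {E : Type*} [NormedAddCommGroup E] [NormedSpace ℝ E]

theorem eventually_det_pos_nhds_id :
    ∀ᶠ L in 𝓝 (ContinuousLinearMap.id ℝ E), 0 < L.det :=
  ContinuousLinearMap.continuous_det.continuousAt.eventually (lt_mem_nhds (by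
    simp [ContinuousLinearMap.det]))

variable [FiniteDimensional ℝ E] [MeasurableSpace E] [BorelSpace E] (μ : Measure E)
  [μ.IsAddHaarMeasure] {K : ℝ≥0} {h : E → E} {A : E → E →L[ℝ] E} {B : Set E}

theorem eventually_integral_det_id_add_smul_eq_measure (hB : MeasurableSet B)
    (hlip : LipschitzWith K h) (h0 : EqOn h 0 Bᶜ)
    (hderiv : ∀ x ∈ B, HasFDerivWithinAt h (A x) B x) (hA : ∀ x ∈ B, ‖A x‖ ≤ K) :
    ∀ᶠ t in 𝓝 (0 : ℝ), ∫ x in B, (ContinuousLinearMap.id ℝ E + t • A x).det ∂μ = μ.real B := by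
  obtain ⟨δ, hδ, hdet⟩ := Metric.eventually_nhds_iff.1 (eventually_det_pos_nhds_id (E := E))
  have small : ∀ᶠ t in 𝓝 (0 : ℝ), ‖t‖ * K < min 1 δ := by
    have continuous : Continuous fun t : ℝ => ‖t‖ * K := by fun_prop
    exact continuous.continuousAt.eventually (gt_mem_nhds (by simpa using hδ))
  filter_upwards [small] with t ht
  have det_pos : ∀ x ∈ B, 0 < (ContinuousLinearMap.id ℝ E + t • A x).det := fun x hx => hdet <| by
    rw [dist_self_add_left, norm_smul]
    exact (mul_le_mul_of_nonneg_left (hA x hx) (norm_nonneg t)).trans_lt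
      (ht.trans_le (min_le_right _ _))
  have contracting : ContractingWith (‖t‖₊ * K) fun x => t • h x :=
    ⟨mod_cast ht.trans_le (min_le_left _ _), (lipschitzWith_smul t).comp hlip⟩
  have bijective := bijective_self_add_of_contractingWith contracting
  have image_eq : (fun x => x + t • h x) '' B = B :=
    image_eq_self_of_bijective_of_eqOn_compl bijective fun x hx => by simp [h0 hx]
  have change_of_variables := integral_image_eq_integral_abs_det_fderiv_smul μ hB
    (fun x hx => (hasFDerivWithinAt_id x B).add ((hderiv x hx).const_smul t))
    bijective.injective.injOn fun _ => (1 : ℝ)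
  calc ∫ x in B, (ContinuousLinearMap.id ℝ E + t • A x).det ∂μ
      = ∫ x in B, |(ContinuousLinearMap.id ℝ E + t • A x).det| • (1 : ℝ) ∂μ :=
        setIntegral_congr_fun hB fun x hx => by simp [abs_of_pos (det_pos x hx)]
    _ = ∫ _ in (fun x => x + t • h x) '' B, (1 : ℝ) ∂μ := change_of_variables.symm
    _ = μ.real B := by rw [image_eq, setIntegral_const, smul_eq_mul, mul_one]

theorem integral_det_id_add_eq_measure (hB : IsCompact B)
    (hlip : LipschitzWith K h) (h0 : EqOn h 0 Bᶜ)
    (hderiv : ∀ x ∈ B, HasFDerivWithinAt h (A x) B x) (hA : ∀ x ∈ B, ‖A x‖ ≤ K)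
    (hcont : ContinuousOn A B) :
    ∫ x in B, (ContinuousLinearMap.id ℝ E + A x).det ∂μ = μ.real B := by
  choose p natDegree_le eval_p using fun x =>
    exists_polynomial_eval_eq_det_one_add_smul (A x : E →ₗ[ℝ] E)
  replace eval_p (x : E) (t : ℝ) :
      (p x).eval t = (ContinuousLinearMap.id ℝ E + t • A x).det := eval_p x t
  have integrable (t : ℝ) : IntegrableOn (fun x => (p x).eval t) B μ := by
    simp only [eval_p]
    exact (ContinuousLinearMap.continuous_det.comp_continuousOn
      (continuousOn_const.add (hcont.const_smul t))).integrableOn_compact hB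
  obtain ⟨q, hq⟩ := exists_polynomial_eval_eq_integral natDegree_le integrable
  simp only [eval_p] at hq
  have eval_eq : ∀ᶠ t in 𝓝 (0 : ℝ), q.eval t = (C (μ.real B)).eval t := by
    filter_upwards [eventually_integral_det_id_add_smul_eq_measure μ hB.measurableSet hlip h0
      hderiv hA] with t ht
    rw [hq, ht, eval_C]
  have q_eq : q = C (μ.real B) :=
    eq_of_infinite_eval_eq _ _ (infinite_of_mem_nhds 0 eval_eq)
  simpa [q_eq] using (hq 1).symm

end VolumePolynomial

section Brouwer

variable {E : Type*} [NormedAddCommGroup E] [InnerProductSpace ℝ E]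

/-- `π` is the nearest-point projection onto the convex set `K`. Nearest points are encoded by
their variational inequality: no point of `K` is seen from `π x` at an acute angle with `x`. -/
def IsMetricProjection (K : Set E) (π : E → E) : Prop :=
  ∀ x, π x ∈ K ∧ ∀ w ∈ K, inner ℝ (x - π x) (w - π x) ≤ 0

theorem exists_isMetricProjection {K : Set E} (hne : K.Nonempty) (hcomplete : IsComplete K)
    (hconv : Convex ℝ K) : ∃ π, IsMetricProjection K π := by
  choose π mem_K norm_eq using exists_norm_eq_iInf_of_complete_convex hne hcomplete hconv
  exact ⟨π, fun x =>
    ⟨mem_K x, (norm_eq_iInf_iff_real_inner_le_zero hconv (mem_K x)).1 (norm_eq x)⟩⟩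

namespace IsMetricProjection

variable {K : Set E} {π : E → E}

theorem eq_self_of_mem (hπ : IsMetricProjection K π) {x : E} (hx : x ∈ K) : π x = x := by
  have inner_nonpos := (hπ x).2 x hx
  exact (sub_eq_zero.1 (real_inner_self_nonpos.1 inner_nonpos)).symm

theorem lipschitzWith (hπ : IsMetricProjection K π) : LipschitzWith 1 π := by
  refine LipschitzWith.of_dist_le_mul fun x y => ?_
  rw [NNReal.coe_one, one_mul, dist_eq_norm, dist_eq_norm]
  have x_obtuse := (hπ x).2 (π y) (hπ y).1
  have y_obtuse := (hπ y).2 (π x) (hπ x).1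
  have norm_sq_le : ‖π x - π y‖ * ‖π x - π y‖ ≤ ‖x - y‖ * ‖π x - π y‖ :=
    calc ‖π x - π y‖ * ‖π x - π y‖ = inner ℝ (π x - π y) (π x - π y) :=
          (real_inner_self_eq_norm_mul_norm _).symm
      _ = inner ℝ (x - y) (π x - π y) + inner ℝ (x - π x) (π y - π x)
            + inner ℝ (y - π y) (π x - π y) := by
          simp only [inner_sub_left, inner_sub_right]; ring
      _ ≤ inner ℝ (x - y) (π x - π y) := by linarith
      _ ≤ ‖x - y‖ * ‖π x - π y‖ := real_inner_le_norm _ _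
  rcases (norm_nonneg (π x - π y)).eq_or_lt with h | h
  · exact h ▸ norm_nonneg _
  · exact le_of_mul_le_mul_right norm_sq_le h

theorem mem_frontier (hπ : IsMetricProjection K π) {x : E} (hx : x ∉ K) : π x ∈ frontier K := by
  refine ⟨subset_closure (hπ x).1, fun mem_interior => hx ?_⟩
  have eventually_mem : ∀ᶠ s in 𝓝 (0 : ℝ), π x + s • (x - π x) ∈ K := by
    refine ContinuousAt.eventually_mem (by fun_prop) ?_
    simpa using mem_interior_iff_mem_nhds.1 mem_interior
  obtain ⟨s, mem_K, s_pos⟩ :=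
    ((eventually_mem.filter_mono nhdsWithin_le_nhds).and self_mem_nhdsWithin :
      ∀ᶠ s in 𝓝[>] (0 : ℝ), _).exists
  have inner_nonpos := (hπ x).2 _ mem_K
  rw [add_sub_cancel_left, inner_smul_right] at inner_nonpos
  have eq_zero := real_inner_self_nonpos.1 (nonpos_of_mul_nonpos_right inner_nonpos s_pos)
  exact sub_eq_zero.1 eq_zero ▸ (hπ x).1

end IsMetricProjection

variable [FiniteDimensional ℝ E]

theorem det_eq_zero_of_hasFDerivWithinAt_of_norm_eq {r : E → E} {r' : E →L[ℝ] E} {s : Set E}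
    {x : E} {R : ℝ} (hs : UniqueDiffWithinAt ℝ s x) (hr : HasFDerivWithinAt r r' s x)
    (hnorm : ∀ y ∈ s, ‖r y‖ = R) (hx : x ∈ s) (hR : R ≠ 0) : r'.det = 0 := by
  by_contra det_ne
  have deriv_norm_sq : 2 • (innerSL ℝ (r x)).comp r' = 0 :=
    hs.eq hr.norm_sq ((hasFDerivWithinAt_const (R ^ 2) x s).congr
      (fun y hy => congrArg (· ^ 2) (hnorm y hy)) (congrArg (· ^ 2) (hnorm x hx)))
  obtain ⟨v, hv⟩ := (LinearMap.equivOfDetNeZero (r' : E →ₗ[ℝ] E) det_ne).surjective (r x)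
  have hv : r' v = r x := hv
  have := DFunLike.congr_fun deriv_norm_sq v
  simp [hv, hnorm x hx, hR] at this

theorem integral_det_fderivWithin_eq_measure [MeasurableSpace E] [BorelSpace E] (μ : Measure E)
    [μ.IsAddHaarMeasure] {B : Set E} (hcomp : IsCompact B) (hconv : Convex ℝ B)
    (hint : (interior B).Nonempty) {r : E → E} (hr : ContDiffOn ℝ 1 r B)
    (hfrontier : EqOn r id (frontier B)) :
    ∫ x in B, (fderivWithin ℝ r B x).det ∂μ = μ.real B := by
  let A (x : E) : E →L[ℝ] E := fderivWithin ℝ r B x - ContinuousLinearMap.id ℝ E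
  have hasFDeriv (x) (hx : x ∈ B) : HasFDerivWithinAt (fun y => r y - y) (A x) B x :=
    (hr.differentiableOn one_ne_zero x hx).hasFDerivWithinAt.sub (hasFDerivWithinAt_id x B)
  have continuousOn_A : ContinuousOn A B :=
    (hr.continuousOn_fderivWithin (uniqueDiffOn_convex hconv hint) le_rfl).sub continuousOn_const
  obtain ⟨K, norm_A_le⟩ : ∃ K : ℝ≥0, ∀ x ∈ B, ‖A x‖ ≤ K :=
    let ⟨K, hK⟩ := hcomp.exists_bound_of_continuousOn continuousOn_A
    ⟨K.toNNReal, fun x hx => (hK x hx).trans K.le_coe_toNNReal⟩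
  obtain ⟨π, hπ⟩ := exists_isMetricProjection (hint.mono interior_subset) hcomp.isComplete hconv
  have lipschitz : LipschitzWith K fun x => r (π x) - π x := by
    have := (hconv.lipschitzOnWith_of_nnnorm_hasFDerivWithin_le hasFDeriv norm_A_le).comp
      hπ.lipschitzWith.lipschitzOnWith (s := univ) fun x _ => (hπ x).1
    rwa [mul_one, lipschitzOnWith_univ] at this
  have eq_zero_off : EqOn (fun x => r (π x) - π x) 0 Bᶜ := fun x hx =>
    sub_eq_zero.2 (hfrontier (hπ.mem_frontier hx))
  have hasFDeriv_extension (x) (hx : x ∈ B) :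
      HasFDerivWithinAt (fun y => r (π y) - π y) (A x) B x :=
    (hasFDeriv x hx).congr' (fun y hy => by rw [hπ.eq_self_of_mem hy]) hx
  simpa only [A, add_sub_cancel] using integral_det_id_add_eq_measure μ hcomp lipschitz
    eq_zero_off hasFDeriv_extension norm_A_le continuousOn_A

theorem not_exists_contDiffOn_retraction_sphere {R : ℝ} (hR : 0 < R) :
    ¬ ∃ r : E → E, ContDiffOn ℝ 1 r (closedBall 0 R) ∧
      MapsTo r (closedBall 0 R) (sphere 0 R) ∧ EqOn r id (sphere 0 R) := by
  rintro ⟨r, smooth, mapsTo, eqOn⟩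
  let _ : MeasurableSpace E := borel E
  have : BorelSpace E := ⟨rfl⟩
  have isCompact : IsCompact (closedBall (0 : E) R) := isCompact_closedBall 0 R
  have convex : Convex ℝ (closedBall (0 : E) R) := convex_closedBall 0 R
  have interior_nonempty : (interior (closedBall (0 : E) R)).Nonempty :=
    ⟨0, ball_subset_interior_closedBall (mem_ball_self hR)⟩
  have det_eq_zero (x) (hx : x ∈ closedBall 0 R) :
      (fderivWithin ℝ r (closedBall 0 R) x).det = 0 :=
    det_eq_zero_of_hasFDerivWithinAt_of_norm_eq
      (uniqueDiffOn_convex convex interior_nonempty x hx)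
      (smooth.differentiableOn one_ne_zero x hx).hasFDerivWithinAt
      (fun y hy => mem_sphere_zero_iff_norm.1 (mapsTo hy)) hx hR.ne'
  have volume_eq := integral_det_fderivWithin_eq_measure Measure.addHaar isCompact convex
    interior_nonempty smooth (frontier_closedBall (0 : E) hR.ne' ▸ eqOn)
  rw [setIntegral_congr_fun isCompact.measurableSet det_eq_zero, integral_zero] at volume_eq
  exact (ENNReal.toReal_pos (measure_closedBall_pos _ 0 hR).ne'
    isCompact.measure_lt_top.ne).ne volume_eq

theorem exists_eq_zero_of_contDiffOn_of_eqOn_sphere {R : ℝ} (hR : 0 < R) {w : E → E}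
    (hw : ContDiffOn ℝ 1 w (closedBall 0 R)) (hsphere : EqOn w id (sphere 0 R)) :
    ∃ x ∈ closedBall 0 R, w x = 0 := by
  by_contra! ne_zero
  refine not_exists_contDiffOn_retraction_sphere hR ⟨fun x => (R / ‖w x‖) • w x, ?_, ?_, ?_⟩
  · exact (contDiffOn_const.div (hw.norm ℝ ne_zero) fun x hx => norm_ne_zero_iff.2
      (ne_zero x hx)).smul hw
  · intro x hx
    rw [mem_sphere_zero_iff_norm, norm_smul, norm_div, norm_norm,
      div_mul_cancel₀ _ (norm_ne_zero_iff.2 (ne_zero x hx)), Real.norm_of_nonneg hR.le]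
  · intro x hx
    simp only [hsphere hx, id_eq, mem_sphere_zero_iff_norm.1 hx, div_self hR.ne', one_smul]

theorem exists_dist_lt_of_continuous_of_norm_le {F : E → E} {R : ℝ} (hF : Continuous F)
    (hR : ∀ x, ‖F x‖ ≤ R) {ε : ℝ} (hε : 0 < ε) : ∃ x ∈ closedBall 0 (R + 1), dist (F x) x < ε := by
  have R_nonneg : 0 ≤ R := (norm_nonneg _).trans (hR 0)
  obtain ⟨P, smooth, dist_P_lt, -⟩ := hF.exists_contDiff_approx 1
    (continuous_const (y := min ε 1)) fun _ => lt_min hε one_pos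
  have norm_P_le (x : E) : ‖P x‖ ≤ R + 1 := by
    have := (dist_P_lt x).trans_le (min_le_right _ _)
    linarith [norm_le_norm_add_norm_sub' (P x) (F x), hR x, dist_eq_norm (P x) (F x)]
  let χ : ContDiffBump (0 : E) := ⟨R + 1, R + 2, by linarith, by linarith⟩
  obtain ⟨x, -, hx⟩ := exists_eq_zero_of_contDiffOn_of_eqOn_sphere (R := R + 2) (by linarith)
    (w := fun x => x - χ x • P x) (contDiff_id.sub (χ.contDiff.smul smooth)).contDiffOn
    fun x hx => by simp [χ.zero_of_le_dist (mem_sphere.1 hx).ge]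
  have eq_smul : χ x • P x = x := (sub_eq_zero.1 hx).symm
  have x_mem : x ∈ closedBall 0 (R + 1) := by
    rw [mem_closedBall_zero_iff, ← eq_smul, norm_smul, Real.norm_of_nonneg χ.nonneg]
    exact (mul_le_of_le_one_left (norm_nonneg _) χ.le_one).trans (norm_P_le x)
  have P_eq : P x = x := by simpa only [χ.one_of_mem_closedBall x_mem, one_smul] using eq_smul
  refine ⟨x, x_mem, ?_⟩
  rw [dist_comm]
  simpa only [P_eq] using (dist_P_lt x).trans_le (min_le_left _ _)

theorem exists_isFixedPt_of_continuous_of_norm_le {F : E → E} {R : ℝ} (hF : Continuous F)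
    (hR : ∀ x, ‖F x‖ ≤ R) : ∃ x, IsFixedPt F x := by
  have R_nonneg : 0 ≤ R := (norm_nonneg _).trans (hR 0)
  obtain ⟨x, -, minimal⟩ := (isCompact_closedBall (0 : E) (R + 1)).exists_isMinOn
    ⟨0, mem_closedBall_self (by linarith)⟩ (hF.dist continuous_id).continuousOn
  refine ⟨x, dist_le_zero.1 (le_of_forall_pos_lt_add fun ε hε => ?_)⟩
  obtain ⟨y, hy, hlt⟩ := exists_dist_lt_of_continuous_of_norm_le hF hR hε
  rw [zero_add]
  exact (minimal hy).trans_lt hlt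

theorem exists_isFixedPt_of_inner {K : Set E} (hcomp : IsCompact K) (hconv : Convex ℝ K)
    (hne : K.Nonempty) {F : E → E} (hF : ContinuousOn F K) (hmaps : MapsTo F K K) :
    ∃ x ∈ K, IsFixedPt F x := by
  obtain ⟨π, hπ⟩ := exists_isMetricProjection hne hcomp.isComplete hconv
  obtain ⟨R, hR⟩ := hcomp.isBounded.exists_norm_le
  obtain ⟨x, hx⟩ := exists_isFixedPt_of_continuous_of_norm_le
    (hF.comp_continuous hπ.lipschitzWith.continuous fun x => (hπ x).1)
    fun x => hR _ (hmaps (hπ x).1)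
  have x_mem : x ∈ K := hx ▸ hmaps (hπ x).1
  exact ⟨x, x_mem, by simpa only [IsFixedPt, comp_apply, hπ.eq_self_of_mem x_mem] using hx⟩

theorem exists_isFixedPt_of_isCompact_of_convex {V : Type*} [AddCommGroup V] [Module ℝ V]
    [TopologicalSpace V] [IsTopologicalAddGroup V] [ContinuousSMul ℝ V] [T2Space V]
    [FiniteDimensional ℝ V] {K : Set V} (hcomp : IsCompact K) (hconv : Convex ℝ K)
    (hne : K.Nonempty) {F : V → V} (hF : ContinuousOn F K) (hmaps : MapsTo F K K) :
    ∃ x ∈ K, IsFixedPt F x := by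
  let e : V ≃L[ℝ] EuclideanSpace ℝ (Fin (Module.finrank ℝ V)) := toEuclidean
  have mapsTo_symm : MapsTo e.symm (e '' K) K := by
    rintro _ ⟨x, hx, rfl⟩
    simpa using hx
  obtain ⟨_, ⟨x, hx, rfl⟩, fixed⟩ := exists_isFixedPt_of_inner (F := e ∘ F ∘ e.symm)
    (hcomp.image e.continuous) (hconv.linear_image e.toLinearMap) (hne.image e)
    (e.continuous.comp_continuousOn (hF.comp e.symm.continuous.continuousOn mapsTo_symm))
    fun y hy => mem_image_of_mem e (hmaps (mapsTo_symm hy))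
  exact ⟨x, hx, e.injective (by simpa [IsFixedPt] using fixed)⟩

end Brouwer

section PeriodicPoints

variable {α : Type*} [TopologicalSpace α] [PartialOrder α] {f : α → α} {u : α}

theorem isFixedPt_iterate_of_le_of_mem_closure [ClosedIciTopology α] (hf : Monotone f) {n : ℕ}
    (hu : u ≤ f^[n] u) (hcl : u ∈ closure (periodicPts f ∩ Ici u)) : IsFixedPt f^[n] u := by
  have iterate_le_of_mem : periodicPts f ∩ Ici u ⊆ Ici (f^[n] u) := by
    rintro v ⟨⟨m, m_pos, hv⟩, hle⟩
    calc f^[n] u ≤ (f^[n])^[m] u := (hf.iterate n).monotone_iterate_of_le_map hu m_pos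
      _ ≤ (f^[n])^[m] v := (hf.iterate n).iterate m hle
      _ = v := hv.iterate n
  exact (closure_minimal iterate_le_of_mem isClosed_Ici hcl).antisymm hu

theorem isFixedPt_iterate_of_ge_of_mem_closure [ClosedIicTopology α] (hf : Monotone f) {n : ℕ}
    (hu : f^[n] u ≤ u) (hcl : u ∈ closure (periodicPts f ∩ Iic u)) : IsFixedPt f^[n] u :=
  isFixedPt_iterate_of_le_of_mem_closure (α := αᵒᵈ) hf.dual hu hcl

end PeriodicPoints

theorem mem_closure_inter_preimage_val_of_dense {X : Type*} [TopologicalSpace X] {Ω O : Set X}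
    (hΩ : IsOpen Ω) {S : Set Ω} (hS : Dense S) (hO : IsOpen O) {y : Ω} (hy : (y : X) ∈ closure O) :
    y ∈ closure (S ∩ Subtype.val ⁻¹' O) := by
  have mem_closure_preimage : y ∈ closure (Subtype.val ⁻¹' O) := by
    rwa [← hΩ.isOpenMap_subtype_val.preimage_closure_eq_closure_preimage continuous_subtype_val]
  rw [inter_comm]
  exact closure_minimal (hS.open_subset_closure_inter (hO.preimage continuous_subtype_val))
    isClosed_closure mem_closure_preimage

section OrderInterior

variable {V : Type*} [AddCommGroup V] [PartialOrder V] [IsOrderedAddMonoid V] [TopologicalSpace V]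
  [IsTopologicalAddGroup V] {A : Set V} {v y : V}

theorem mem_interior_Ici_iff_sub_mem : v ∈ interior (Ici y) ↔ v - y ∈ interior (Ici 0) := by
  have preimage_eq : Ici y = Homeomorph.subRight y ⁻¹' Ici 0 := by ext; simp
  rw [preimage_eq, ← (Homeomorph.subRight y).preimage_interior]
  rfl

theorem mem_interior_Iic_iff_sub_mem : v ∈ interior (Iic y) ↔ y - v ∈ interior (Ici 0) := by
  have preimage_eq : Iic y = Homeomorph.subLeft y ⁻¹' Ici 0 := by ext; simp [Homeomorph.subLeft]
  rw [preimage_eq, ← (Homeomorph.subLeft y).preimage_interior]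
  rfl

theorem mem_interior_Iic_comm : v ∈ interior (Iic y) ↔ y ∈ interior (Ici v) := by
  rw [mem_interior_Iic_iff_sub_mem, ← mem_interior_Ici_iff_sub_mem]

theorem mem_of_isUpperSet_of_mem_interior_Ici (hA : IsUpperSet A) (hy : y ∈ frontier A)
    (hv : v ∈ interior (Ici y)) : v ∈ A := by
  have Iic_mem : Iic v ∈ 𝓝 y := mem_interior_iff_mem_nhds.1 (mem_interior_Iic_comm.2 hv)
  obtain ⟨a, a_le, a_mem⟩ := mem_closure_iff_nhds.1 (frontier_subset_closure hy) _ Iic_mem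
  exact hA a_le a_mem

theorem notMem_of_isUpperSet_of_mem_interior_Iic (hA : IsUpperSet A) (hy : y ∈ frontier A)
    (hv : v ∈ interior (Iic y)) : v ∉ A := by
  have Ici_mem : Ici v ∈ 𝓝 y := mem_interior_iff_mem_nhds.1 (mem_interior_Iic_comm.1 hv)
  obtain ⟨a, le_a, a_notMem⟩ := mem_closure_iff_nhds.1
    (frontier_subset_closure (frontier_compl A ▸ hy)) _ Ici_mem
  exact fun v_mem => a_notMem (hA le_a v_mem)

variable [Module ℝ V] [ContinuousSMul ℝ V] [PosSMulMono ℝ V]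

theorem mem_closure_interior_Ici (hint : (interior (Ici (0 : V))).Nonempty) (y : V) :
    y ∈ closure (interior (Ici y)) := by
  obtain ⟨c, hc⟩ := hint
  have nonempty : (interior (Ici y)).Nonempty :=
    ⟨c + y, mem_interior_Ici_iff_sub_mem.2 (by rwa [add_sub_cancel_right])⟩
  rw [(convex_Ici (𝕜 := ℝ) y).closure_interior_eq_closure_of_nonempty_interior nonempty]
  exact subset_closure self_mem_Ici

theorem mem_closure_interior_Iic (hint : (interior (Ici (0 : V))).Nonempty) (y : V) :
    y ∈ closure (interior (Iic y)) := by
  obtain ⟨c, hc⟩ := hint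
  have nonempty : (interior (Iic y)).Nonempty :=
    ⟨y - c, mem_interior_Iic_iff_sub_mem.2 (by rwa [sub_sub_cancel])⟩
  rw [(convex_Iic (𝕜 := ℝ) y).closure_interior_eq_closure_of_nonempty_interior nonempty]
  exact subset_closure self_mem_Iic

end OrderInterior

section Normality

open scoped Pointwise

variable {V : Type*} [NormedAddCommGroup V] [NormedSpace ℝ V] [FiniteDimensional ℝ V]
  [PartialOrder V] [IsOrderedAddMonoid V] [PosSMulMono ℝ V] [ClosedIciTopology V]

variable (V) in
theorem exists_forall_norm_le_mul_norm_of_nonneg_of_le :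
    ∃ M : ℝ, ∀ a b : V, 0 ≤ a → a ≤ b → ‖a‖ ≤ M * ‖b‖ := by
  have isClosed : IsClosed (sphere (0 : V) 1 ∩ Ici 0 + Ici 0) :=
    isClosed_Ici.add_left_of_isCompact ((isCompact_sphere 0 1).inter_right isClosed_Ici)
  have zero_notMem : (0 : V) ∉ sphere (0 : V) 1 ∩ Ici 0 + Ici 0 := by
    rintro ⟨s, ⟨norm_s, s_nonneg⟩, c, c_nonneg, sum_eq⟩
    have s_eq : s = 0 := ((add_eq_zero_iff_of_nonneg s_nonneg c_nonneg).1 sum_eq).1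
    simp [s_eq] at norm_s
  obtain ⟨ε, ε_pos, hε⟩ := Metric.mem_nhds_iff.1 (isClosed.isOpen_compl.mem_nhds zero_notMem)
  refine ⟨ε⁻¹, fun a b a_nonneg a_le => ?_⟩
  rcases eq_or_ne a 0 with rfl | a_ne
  · rw [norm_zero]; positivity
  have norm_pos : 0 < ‖a‖ := norm_pos_iff.2 a_ne
  have mem_sum : ‖a‖⁻¹ • b ∈ sphere (0 : V) 1 ∩ Ici 0 + Ici 0 :=
    ⟨‖a‖⁻¹ • a, ⟨by simp [norm_smul, norm_pos.ne'], smul_nonneg (by positivity) a_nonneg⟩,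
      ‖a‖⁻¹ • (b - a), smul_nonneg (by positivity) (sub_nonneg.2 a_le), by simp [smul_sub]⟩
  have ε_le : ε ≤ ‖a‖⁻¹ * ‖b‖ := by
    simpa [norm_smul] using fun mem_ball => hε mem_ball mem_sum
  rwa [inv_mul_eq_div, le_div_iff₀ ε_pos, mul_comm, ← le_inv_mul_iff₀' norm_pos]

variable (V) in
theorem exists_forall_Icc_subset_closedBall :
    ∃ M : ℝ, ∀ z w : V, Icc z w ⊆ closedBall z (M * ‖w - z‖) := by
  obtain ⟨M, hM⟩ := exists_forall_norm_le_mul_norm_of_nonneg_of_le V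
  refine ⟨M, fun z w v hv => ?_⟩
  rw [mem_closedBall, dist_eq_norm]
  exact hM _ _ (sub_nonneg.2 hv.1) (sub_le_sub_right hv.2 z)

variable (V) in
theorem compactIccSpace_of_finiteDimensional [ClosedIicTopology V] : CompactIccSpace V := by
  obtain ⟨M, hM⟩ := exists_forall_Icc_subset_closedBall V
  exact ⟨fun {z w} => (isCompact_closedBall _ _).of_isClosed_subset
    (isClosed_Ici.inter isClosed_Iic) (hM z w)⟩

theorem tendsto_Icc_smallSets_nhds (y : V) :
    Tendsto (fun p : V × V => Icc p.1 p.2) (𝓝 y ×ˢ 𝓝 y) (𝓝 y).smallSets := by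
  obtain ⟨M, hM⟩ := exists_forall_Icc_subset_closedBall V
  refine tendsto_smallSets_iff.2 fun U hU => ?_
  obtain ⟨ε, ε_pos, ball_subset⟩ := Metric.mem_nhds_iff.1 hU
  have radius_continuous : Continuous fun p : V × V => M * ‖p.2 - p.1‖ + dist p.1 y := by fun_prop
  have radius_lt : ∀ᶠ p in 𝓝 (y, y), M * ‖p.2 - p.1‖ + dist p.1 y < ε :=
    radius_continuous.continuousAt.eventually (gt_mem_nhds (by simpa using ε_pos))
  rw [← nhds_prod_eq]
  filter_upwards [radius_lt] with p hp
  exact (hM p.1 p.2).trans ((closedBall_subset_ball' hp).trans ball_subset)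

end Normality

section Perturbation

theorem min_one_infDist_eq_zero_iff {X : Type*} [PseudoMetricSpace X] {S : Set X} {x : X}
    (hS : S.Nonempty) : min 1 (infDist x S) = 0 ↔ x ∈ closure S := by
  rw [mem_closure_iff_infDist_zero hS]
  grind

variable {V : Type*} [NormedAddCommGroup V] [NormedSpace ℝ V] [FiniteDimensional ℝ V]
  [PartialOrder V] [IsOrderedAddMonoid V] [PosSMulMono ℝ V]

theorem exists_mem_Icc_eq_add_smul_sub [CompactIccSpace V] {A : Set V} {g : V → V} {z w : V}
    (hzw : z ≤ w) (hg : ContinuousOn g (Icc z w)) (hmaps : MapsTo g (Icc z w) (Icc z w)) :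
    ∃ u ∈ Icc z w, (u ∈ A ∧ u = g u + min 1 (infDist u Aᶜ) • (z - g u)) ∨
      (u ∈ Aᶜ ∧ u = g u + min 1 (infDist u A) • (w - g u)) := by
  let α (v : V) : ℝ := min 1 (infDist v A)
  let β (v : V) : ℝ := min 1 (infDist v Aᶜ)
  let F (v : V) : V := g v + α v • (w - g v) + β v • (z - g v)
  have F_of_mem {v} (hv : v ∈ A) : F v = g v + β v • (z - g v) := by
    simp [F, α, infDist_zero_of_mem hv]
  have F_of_mem_compl {v} (hv : v ∈ Aᶜ) : F v = g v + α v • (w - g v) := by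
    simp [F, β, infDist_zero_of_mem hv]
  have min_one_infDist_mem (v : V) (S : Set V) : min 1 (infDist v S) ∈ Icc (0 : ℝ) 1 :=
    ⟨le_min zero_le_one infDist_nonneg, min_le_left _ _⟩
  have continuousOn : ContinuousOn F (Icc z w) := by
    have (S : Set V) : Continuous (infDist · S) := continuous_infDist_pt S
    fun_prop
  have mapsTo : MapsTo F (Icc z w) (Icc z w) := fun v hv => by
    rcases em (v ∈ A) with v_mem | v_mem
    · rw [F_of_mem v_mem]
      exact (convex_Icc z w).add_smul_sub_mem (hmaps hv) (left_mem_Icc.2 hzw)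
        (min_one_infDist_mem v Aᶜ)
    · rw [F_of_mem_compl v_mem]
      exact (convex_Icc z w).add_smul_sub_mem (hmaps hv) (right_mem_Icc.2 hzw)
        (min_one_infDist_mem v A)
  obtain ⟨u, hu, fixed⟩ := exists_isFixedPt_of_isCompact_of_convex isCompact_Icc
    (convex_Icc z w) (nonempty_Icc.2 hzw) continuousOn mapsTo
  exact ⟨u, hu, (em (u ∈ A)).imp (fun h => ⟨h, fixed.eq.symm.trans (F_of_mem h)⟩)
    fun h => ⟨h, fixed.eq.symm.trans (F_of_mem_compl h)⟩⟩

theorem exists_isFixedPt_mem_frontier [CompactIccSpace V] {A : Set V} {g : V → V} {z w : V}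
    (hzw : z ≤ w) (hz : z ∉ A) (hw : w ∈ A) (hg : ContinuousOn g (Icc z w))
    (hmaps : MapsTo g (Icc z w) (Icc z w)) (hsub : ∀ u ∈ Icc z w, u ≤ g u → IsFixedPt g u)
    (hsuper : ∀ u ∈ Icc z w, g u ≤ u → IsFixedPt g u) :
    ∃ u ∈ Icc z w ∩ frontier A, IsFixedPt g u := by
  rw [frontier_eq_closure_inter_closure]
  obtain ⟨u, hu, ⟨u_mem, u_eq⟩ | ⟨u_mem, u_eq⟩⟩ :=
    exists_mem_Icc_eq_add_smul_sub (A := A) hzw hg hmaps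
  · have fixed : IsFixedPt g u := hsub u hu <| u_eq.le.trans <| add_le_of_nonpos_right <|
      smul_nonpos_of_nonneg_of_nonpos (le_min zero_le_one infDist_nonneg)
        (sub_nonpos.2 (hmaps hu).1)
    rw [fixed.eq, left_eq_add, smul_eq_zero, min_one_infDist_eq_zero_iff ⟨z, hz⟩] at u_eq
    have z_ne : z - u ≠ 0 := sub_ne_zero.2 (ne_of_mem_of_not_mem u_mem hz).symm
    exact ⟨u, ⟨hu, subset_closure u_mem, u_eq.resolve_right z_ne⟩, fixed⟩
  · have fixed : IsFixedPt g u := hsuper u hu <| u_eq.ge.trans' <| le_add_of_nonneg_right <|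
      smul_nonneg (le_min zero_le_one infDist_nonneg) (sub_nonneg.2 (hmaps hu).2)
    rw [fixed.eq, left_eq_add, smul_eq_zero, min_one_infDist_eq_zero_iff ⟨w, hw⟩] at u_eq
    have w_ne : w - u ≠ 0 := sub_ne_zero.2 (ne_of_mem_of_not_mem hw u_mem)
    exact ⟨u, ⟨hu, u_eq.resolve_right w_ne, subset_closure u_mem⟩, fixed⟩

variable [OrderClosedTopology V]

theorem exists_isFixedPt_val_mem_frontier {Ω A : Set V} {g : Ω → Ω} (hg : Continuous g)
    (hmono : Monotone g) (hsub : ∀ u, u ≤ g u → IsFixedPt g u)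
    (hsuper : ∀ u, g u ≤ u → IsFixedPt g u) {z w : Ω} (hz : IsFixedPt g z) (hw : IsFixedPt g w)
    (hzw : z ≤ w) (hIcc : Icc (z : V) w ⊆ Ω) (hzA : (z : V) ∉ A) (hwA : (w : V) ∈ A) :
    ∃ u : Ω, (u : V) ∈ Icc (z : V) w ∩ frontier A ∧ IsFixedPt g u := by
  have : CompactIccSpace V := compactIccSpace_of_finiteDimensional V
  let G : V → V := extend Subtype.val (Subtype.val ∘ g) id
  have G_val (u : Ω) : G u = g u := Subtype.val_injective.extend_apply _ _ u
  have continuousOn : ContinuousOn G Ω := by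
    rw [continuousOn_iff_continuous_domRestrict]
    exact (funext G_val : Ω.domRestrict G = _) ▸ continuous_subtype_val.comp hg
  have mapsTo : MapsTo G (Icc z w) (Icc z w) := fun v hv => by
    lift v to Ω using hIcc hv
    rw [G_val]
    exact ⟨hz.eq.symm.le.trans (hmono hv.1), (hmono hv.2).trans hw.eq.le⟩
  have fixed_iff (u : Ω) : IsFixedPt G u ↔ IsFixedPt g u := by
    rw [IsFixedPt, IsFixedPt, G_val, Subtype.ext_iff]
  obtain ⟨v, hv, fixed⟩ := exists_isFixedPt_mem_frontier
    (Subtype.coe_le_coe.2 hzw) hzA hwA (continuousOn.mono hIcc) mapsTo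
    (fun u hu hle => by
      lift u to Ω using hIcc hu
      exact (fixed_iff u).2 (hsub u (by rwa [G_val] at hle)))
    (fun u hu hle => by
      lift u to Ω using hIcc hu
      exact (fixed_iff u).2 (hsuper u (by rwa [G_val] at hle)))
  lift v to Ω using hIcc hv.1
  exact ⟨v, hv, (fixed_iff v).1 fixed⟩

theorem frontier_inter_subset_closure_periodicPts {Ω A : Set V} (hΩ : IsOpen Ω)
    {f : Ω → Ω} (hf : Continuous f) (hmono : Monotone f) (hdense : Dense (periodicPts f))
    (hA : IsUpperSet A) (hint : (interior (Ici (0 : V))).Nonempty) :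
    frontier A ∩ Ω ⊆ closure (Subtype.val '' periodicPts f ∩ (frontier A ∩ Ω)) := by
  have mem_closure_above (v : Ω) : v ∈ closure (periodicPts f ∩ (↑) ⁻¹' interior (Ici (v : V))) :=
    mem_closure_inter_preimage_val_of_dense hΩ hdense isOpen_interior
      (mem_closure_interior_Ici hint v)
  have mem_closure_below (v : Ω) : v ∈ closure (periodicPts f ∩ (↑) ⁻¹' interior (Iic (v : V))) :=
    mem_closure_inter_preimage_val_of_dense hΩ hdense isOpen_interior
      (mem_closure_interior_Iic hint v)
  rintro y ⟨y_mem, y_mem_Ω⟩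
  lift y to Ω using y_mem_Ω
  refine mem_closure_iff_nhds.2 fun U hU => ?_
  have eventually_Icc_subset : ∀ᶠ p in 𝓝 (y : V) ×ˢ 𝓝 (y : V), Icc p.1 p.2 ⊆ U ∩ Ω :=
    tendsto_smallSets_iff.1 (tendsto_Icc_smallSets_nhds _) _ (inter_mem hU (hΩ.mem_nhds y.2))
  obtain ⟨W, hW, Icc_subset⟩ := eventually_prod_self_iff'.1 eventually_Icc_subset
  have preimage_W_mem : (↑) ⁻¹' W ∈ 𝓝 y := continuous_subtype_val.continuousAt hW
  obtain ⟨z, hzW, ⟨p, p_pos, hz⟩, z_below⟩ :=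
    mem_closure_iff_nhds.1 (mem_closure_below y) _ preimage_W_mem
  obtain ⟨w, hwW, ⟨q, q_pos, hw⟩, w_above⟩ :=
    mem_closure_iff_nhds.1 (mem_closure_above y) _ preimage_W_mem
  have z_le_w : z ≤ w := (interior_subset z_below).trans (interior_subset w_above)
  obtain ⟨u, ⟨u_mem_Icc, u_mem⟩, fixed⟩ := exists_isFixedPt_val_mem_frontier
    (hf.iterate (p * q)) (hmono.iterate (p * q))
    (fun u hu => isFixedPt_iterate_of_le_of_mem_closure hmono hu <| closure_mono
      (inter_subset_inter_right _ (preimage_mono interior_subset)) (mem_closure_above u))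
    (fun u hu => isFixedPt_iterate_of_ge_of_mem_closure hmono hu <| closure_mono
      (inter_subset_inter_right _ (preimage_mono interior_subset)) (mem_closure_below u))
    (hz.mul_const q) (hw.const_mul p) z_le_w
    ((Icc_subset z hzW w hwW).trans inter_subset_right)
    (notMem_of_isUpperSet_of_mem_interior_Iic hA y_mem z_below)
    (mem_of_isUpperSet_of_mem_interior_Ici hA y_mem w_above)
  exact ⟨u, (Icc_subset z hzW w hwW u_mem_Icc).1,
    ⟨u, mk_mem_periodicPts (mul_pos p_pos q_pos) fixed, rfl⟩, u_mem, u.2⟩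

end Perturbation

section Cone

variable {V : Type*} [AddCommGroup V] [Module ℝ V] {C : Set V}

theorem exists_partialOrder_le_iff_sub_mem (hconv : Convex ℝ C)
    (hscal : ∀ c : ℝ, 0 ≤ c → ∀ x ∈ C, c • x ∈ C) (hpointed : C ∩ -C = {0}) :
    ∃ _ : PartialOrder V, IsOrderedAddMonoid V ∧ PosSMulMono ℝ V ∧
      ∀ x y : V, x ≤ y ↔ y - x ∈ C := by
  have zero_mem : (0 : V) ∈ C := (hpointed.ge rfl).1
  have add_mem {x y : V} (hx : x ∈ C) (hy : y ∈ C) : x + y ∈ C := by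
    have midpoint_mem := hscal 2 zero_le_two _ (hconv.midpoint_mem hx hy)
    rwa [midpoint_eq_smul_add, smul_smul, mul_invOf_self, one_smul] at midpoint_mem
  let cone : PointedCone ℝ V :=
    { carrier := C
      add_mem' := add_mem
      zero_mem' := zero_mem
      smul_mem' := fun c x hx => hscal c c.2 x hx }
  have salient : (cone : ConvexCone ℝ V).Salient := fun x hx x_ne neg_mem =>
    x_ne (hpointed.le ⟨hx, neg_mem⟩)
  let order : PartialOrder V := (cone : ConvexCone ℝ V).toPartialOrder zero_mem salient
  have orderedAddMonoid : IsOrderedAddMonoid V :=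
    (cone : ConvexCone ℝ V).to_isOrderedAddMonoid zero_mem salient
  have orderedModule : IsOrderedModule ℝ V := cone.to_isOrderedModule fun _ _ => Iff.rfl
  exact ⟨order, orderedAddMonoid, inferInstance, fun _ _ => Iff.rfl⟩

end Cone

section OrderedGroup

variable {V : Type*} [AddCommGroup V] [PartialOrder V] [IsOrderedAddMonoid V] [TopologicalSpace V]
  [IsTopologicalAddGroup V]

theorem orderClosedTopology_of_isClosed_Ici_zero (hclosed : IsClosed (Ici (0 : V))) :
    OrderClosedTopology V := by
  have sub_continuous : Continuous fun p : V × V => p.2 - p.1 := by fun_prop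
  exact ⟨by simpa [preimage] using hclosed.preimage sub_continuous⟩

theorem image_const_add_frontier_Ici_zero (x : V) :
    (fun v => x + v) '' frontier (Ici 0) = frontier (Ici x) := by
  simpa using (Homeomorph.addLeft x).image_frontier (Ici 0)

theorem image_const_sub_frontier_Ici_zero (x : V) :
    (fun v => x - v) '' frontier (Ici 0) = frontier (Iic x) := by
  simpa [Homeomorph.subLeft] using (Homeomorph.subLeft x).image_frontier (Ici 0)

end OrderedGroup

theorem periodic_points_dense_in_boundary_sections_general
    {V : Type*} [NormedAddCommGroup V] [NormedSpace ℝ V] [FiniteDimensional ℝ V]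
    (C : Set V)
    (hCconv : Convex ℝ C)
    (hCscal : ∀ (c : ℝ), 0 ≤ c → ∀ x ∈ C, c • x ∈ C)
    (hCpointed : C ∩ (-C) = {0})
    (hCclosed : IsClosed C)
    (hCsolid : (interior C).Nonempty)
    (Ω : Set V) (hΩopen : IsOpen Ω)
    (f : Ω → Ω) (hf : Continuous f)
    (hmono : ∀ x y : Ω, ((y : V) - (x : V)) ∈ C → ((f y : V) - (f x : V)) ∈ C)
    (hdense : Dense (periodicPts f))
    (x : V) :
    (((fun v => x + v) '' frontier C) ∩ Ω ⊆
      closure (Subtype.val '' periodicPts f ∩ (((fun v => x + v) '' frontier C) ∩ Ω))) ∧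
    (((fun v => x - v) '' frontier C) ∩ Ω ⊆
      closure (Subtype.val '' periodicPts f ∩ (((fun v => x - v) '' frontier C) ∩ Ω))) := by
  obtain ⟨_, _, _, le_iff⟩ := exists_partialOrder_le_iff_sub_mem hCconv hCscal hCpointed
  obtain rfl : C = Ici 0 := by ext v; simp [le_iff]
  have := orderClosedTopology_of_isClosed_Ici_zero hCclosed
  have monotone : Monotone f := fun a b hab => (le_iff _ _).2 (hmono a b ((le_iff _ _).1 hab))
  have frontier_subset {A : Set V} (hA : IsUpperSet A) :=
    frontier_inter_subset_closure_periodicPts hΩopen hf monotone hdense hA hCsolid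
  rw [image_const_add_frontier_Ici_zero, image_const_sub_frontier_Ici_zero]
  exact ⟨frontier_subset (isUpperSet_Ici x), frontier_compl (Iic x) ▸
    frontier_subset (isLowerSet_Iic x).compl⟩

/-- If a monotone homeomorphism of an open set has dense periodic points, then
the periodic points are dense in `(x + ∂C) ∩ Ω` and in `(x - ∂C) ∩ Ω` for every
`x ∈ Ω`. -/
theorem periodic_points_dense_in_boundary_sections
    {V : Type*} [NormedAddCommGroup V] [NormedSpace ℝ V] [FiniteDimensional ℝ V]
    (C : Set V)
    (hCconv : Convex ℝ C)
    (hCscal : ∀ (c : ℝ), 0 ≤ c → ∀ x ∈ C, c • x ∈ C)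
    (hCpointed : C ∩ (-C) = {0})
    (hCclosed : IsClosed C)
    (hCsolid : (interior C).Nonempty)
    (Ω : Set V) (hΩopen : IsOpen Ω)
    (f : Ω ≃ₜ Ω)
    (hmono : ∀ x y : Ω, ((y : V) - (x : V)) ∈ C → ((f y : V) - (f x : V)) ∈ C)
    (hdense : Dense {x : Ω | ∃ p : ℕ, 1 ≤ p ∧ (⇑f)^[p] x = x})
    (x : V) (hx : x ∈ Ω) :
    (((fun v => x + v) '' frontier C) ∩ Ω ⊆
      closure ({w : V | ∃ hw : w ∈ Ω, ∃ p : ℕ, 1 ≤ p ∧ (⇑f)^[p] ⟨w, hw⟩ = ⟨w, hw⟩} ∩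
        (((fun v => x + v) '' frontier C) ∩ Ω))) ∧
    (((fun v => x - v) '' frontier C) ∩ Ω ⊆
      closure ({w : V | ∃ hw : w ∈ Ω, ∃ p : ℕ, 1 ≤ p ∧ (⇑f)^[p] ⟨w, hw⟩ = ⟨w, hw⟩} ∩
        (((fun v => x - v) '' frontier C) ∩ Ω))) := by
  have dense := periodic_points_dense_in_boundary_sections_general C hCconv hCscal hCpointed
    hCclosed hCsolid Ω hΩopen f f.continuous hmono hdense x
  rwa [Subtype.coe_image] at dense
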